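/- Macroscopic finite speed of propagation (light cone): let W : ℝ → ℝ be C² with W''(u) ≥ α > 0 for all u, and let T > 0. For each N, let X^N_j and X̃^N_j, j ∈ {0,…,N}, be two solutions of the Newton chain on {0,…,N} with common constant right boundary X^N_N = X̃^N_N = N·φ_r, whose positions and velocities coincide at t = 0 for all j ∈ {1,…,N−1}; write U^N_j = X^N_{j+1} − X^N_j, V^N_j = (X^N_j)', and similarly Ũ^N_j, Ṽ^N_j. Assume: (i) there is C ≥ 0 with sup_{t ≥ 0} ( Σ_{j=0}^{N−1} W(U^N_j(t)) + (1/2) Σ_{j=0}^{N−1} (V^N_j(t))² ) ≤ C·N for all N; (ii) K := sup{|W''(u)| : u ∈ (u₁,u₂)} < ∞, where u₁ (resp. u₂) is the infimum (resp. supremum) over all N, all j, and all t ∈ [0,NT] of min(U^N_j(t), Ũ^N_j(t)) (resp. max(U^N_j(t), Ũ^N_j(t))). Set c = e²·√K. Then for every x ∈ (0,1) and every τ < x/c with τ ≤ T: N · sup{ |U^N_j(t) − Ũ^N_j(t)| : 0 ≤ t < Nτ, j > Nx } → 0 as N → ∞, and sup{ |V^N_j(t) − Ṽ^N_j(t)|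 : 0 ≤ t < Nτ, j > Nx } → 0 as N → ∞. -/

import Mathlib

open Set Filter

/-!
Let `D_j = X_j - X̃_j` be the discrepancy of the two solutions. Only the free site `0` can feed a
discrepancy into the chain, and since all strains lie in a bounded set, summing strain differences
from the right boundary gives `‖D_j‖ ≤ N L`. As `W'` is `K`-Lipschitz on the strains, the
acceleration of `D_j` is at most `4K` times the largest of `‖D_{j-1}‖, ‖D_j‖, ‖D_{j+1}‖`. Hence two
time integrations move the estimate one site to the right and yield
`‖D_j(t)‖ ≤ N L (2√K t)^{2k} / (2k)!` for all `k ≤ j`.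

For `e² √K t ≤ y ≤ j` one has `2√K t ≤ 2y e⁻²`, so `s^m / m! ≤ e^s` with `s = 2y` and `m = 2j`
bounds the right-hand side at `k = j` by `N L e^{2y - 4j} ≤ N L e^{-2y}`. With `y = N x` this decays
exponentially in `N`.
-/

section TimeIntegration

open scoped Nat

variable {E : Type*} [NormedAddCommGroup E] [NormedSpace ℝ E]

lemma hasDerivAt_mul_pow_div_factorial (b : ℝ) (m : ℕ) (t : ℝ) :
    HasDerivAt (fun t ↦ (b * t) ^ (m + 1) / (m + 1)!) (b * ((b * t) ^ m / m !)) t := by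
  have h := (((hasDerivAt_id t).const_mul b).pow (m + 1)).div_const ((m + 1)! : ℝ)
  refine h.congr_deriv ?_
  have hm : (m + 1 : ℝ) ≠ 0 := by positivity
  simp only [Nat.factorial_succ, id, Nat.add_sub_cancel]
  push_cast
  field_simp

lemma norm_le_pow_succ_div_factorial_of_norm_deriv_le {f f' : ℝ → E} {A b S : ℝ} (m : ℕ)
    (hf : ∀ t ∈ Ico 0 S, HasDerivWithinAt f (f' t) (Ico 0 S) t) (hf0 : f 0 = 0)
    (hf' : ∀ t ∈ Ico 0 S, ‖f' t‖ ≤ A * b * ((b * t) ^ m / m !)) {t : ℝ} (ht : t ∈ Ico 0 S) :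
    ‖f t‖ ≤ A * ((b * t) ^ (m + 1) / (m + 1)!) := by
  have hsub : Icc 0 t ⊆ Ico 0 S := Icc_subset_Ico_right ht.2
  have hB (r : ℝ) : HasDerivAt (fun r ↦ A * ((b * r) ^ (m + 1) / (m + 1)!))
      (A * b * ((b * r) ^ m / m !)) r := by
    simpa only [mul_assoc] using (hasDerivAt_mul_pow_div_factorial b m r).const_mul A
  exact image_norm_le_of_norm_deriv_right_le_deriv_boundary
    (fun r hr ↦ (hf r (hsub hr)).continuousWithinAt.mono hsub)
    (fun r hr ↦ (hf r (hsub (Ico_subset_Icc_self hr))).mono_of_mem_nhdsWithin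
      (Ico_mem_nhdsGE_of_mem (hsub (Ico_subset_Icc_self hr))))
    (by simp [hf0]) hB
    (fun r hr ↦ hf' r (hsub (Ico_subset_Icc_self hr))) (right_mem_Icc.2 ht.1)

lemma pow_div_factorial_le_exp_sub {y s : ℝ} (hy : 0 ≤ y) (hs : 0 ≤ s)
    (hys : y ≤ s * Real.exp (-2)) (m : ℕ) : y ^ m / m ! ≤ Real.exp (s - 2 * m) := by
  calc y ^ m / m ! ≤ (s * Real.exp (-2)) ^ m / m ! := by gcongr
    _ = s ^ m / m ! * Real.exp (-2) ^ m := by ring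
    _ ≤ Real.exp s * Real.exp (-2) ^ m := by
        gcongr
        exact Real.pow_div_factorial_le_exp s hs m
    _ = Real.exp (s - 2 * m) := by
        rw [← Real.exp_nat_mul, ← Real.exp_add]
        ring_nf

lemma mul_pow_div_factorial_le_exp {a S y t : ℝ} (ha : 0 ≤ a) (hS : Real.exp 2 * a * S ≤ y)
    (ht : t ∈ Ico 0 S) (m : ℕ) : (2 * a * t) ^ m / m ! ≤ Real.exp (2 * y - 2 * m) := by
  have hS0 : 0 ≤ S := ht.1.trans ht.2.le
  have hy : 0 ≤ y := le_trans (by positivity) hS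
  refine pow_div_factorial_le_exp_sub (mul_nonneg (by positivity) ht.1) (by positivity) ?_ m
  calc 2 * a * t ≤ 2 * a * S := by gcongr; exact ht.2.le
    _ = 2 * (Real.exp 2 * a * S) * Real.exp (-2) := by
        rw [Real.exp_neg]
        field_simp
    _ ≤ 2 * y * Real.exp (-2) := by gcongr

end TimeIntegration

lemma lipschitzOnWith_deriv_of_abs_deriv_deriv_le {W : ℝ → ℝ} (hW : ContDiff ℝ 2 W)
    {s : Set ℝ} (hs : Convex ℝ s) {K : ℝ} (hK : ∀ u ∈ s, |deriv (deriv W) u| ≤ K) :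
    LipschitzOnWith K.toNNReal (deriv W) s := by
  have hd : Differentiable ℝ (deriv W) :=
    ((contDiff_succ_iff_deriv (n := 1)).1 hW).2.2.differentiable one_ne_zero
  refine hs.lipschitzOnWith_of_nnnorm_deriv_le (fun u _ ↦ hd u) fun u hu ↦ ?_
  exact NNReal.coe_le_coe.1 ((hK u hu).trans (Real.le_coe_toNNReal K))

section Chain

open scoped Nat NNReal

variable {E : Type*} [NormedAddCommGroup E] [NormedSpace ℝ E]

/-- `(X, V)` are the positions and velocities, for times in `[0, S)`, of a solution of Newton's
equations on the chain `{0, …, N}` with nearest-neighbour force `g` (the derivative `W'` of the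
interaction potential in the scalar case). The equations are imposed at the interior sites, written
`j + 1` with `j + 1 < N`; the motion of the sites `0` and `N` is unconstrained. -/
structure IsNewtonChain (g : E → E) (N : ℕ) (S : ℝ) (X V : ℕ → ℝ → E) : Prop where
  hasDerivWithinAt_position : ∀ j, j + 1 < N → ∀ t ∈ Ico 0 S,
    HasDerivWithinAt (X (j + 1)) (V (j + 1) t) (Ico 0 S) t
  hasDerivWithinAt_velocity : ∀ j, j + 1 < N → ∀ t ∈ Ico 0 S,
    HasDerivWithinAt (V (j + 1))
      (g (X (j + 2) t - X (j + 1) t) - g (X (j + 1) t - X j t)) (Ico 0 S) t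

/-- The differential inequalities satisfied, for times in `[0, S)`, by the position and velocity
discrepancies `D` and `V` of two solutions of a Newton chain on `{0, …, N}` with the same initial
data at the interior sites and the same right boundary, when the force is `K`-Lipschitz and the
strains of the two solutions differ by at most `L`. The discrepancy of site `0` is an input. -/
structure IsChainDiscrepancy (K : ℝ≥0) (L : ℝ) (N : ℕ) (S : ℝ) (D V : ℕ → ℝ → E) : Prop where
  hasDerivWithinAt : ∀ j, j + 1 < N → ∀ t ∈ Ico 0 S,
    HasDerivWithinAt (D (j + 1)) (V (j + 1) t) (Ico 0 S) t
  differentiableOn_velocity : ∀ j, j + 1 < N → DifferentiableOn ℝ (V (j + 1)) (Ico 0 S)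
  norm_derivWithin_velocity_le : ∀ j, j + 1 < N → ∀ t ∈ Ico 0 S,
    ‖derivWithin (V (j + 1)) (Ico 0 S) t‖ ≤
      K * (‖D (j + 2) t - D (j + 1) t‖ + ‖D (j + 1) t - D j t‖)
  initial_position : ∀ j, j + 1 < N → D (j + 1) 0 = 0
  initial_velocity : ∀ j, j + 1 < N → V (j + 1) 0 = 0
  right_boundary : ∀ t ∈ Ico 0 S, D N t = 0
  norm_strain_le : ∀ j < N, ∀ t ∈ Ico 0 S, ‖D (j + 1) t - D j t‖ ≤ L

lemma IsNewtonChain.of_contDiffOn {g : E → E} {N : ℕ} {S : ℝ} {X : ℕ → ℝ → E}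
    (hX : ∀ j, 1 ≤ j → j ≤ N - 1 → ContDiffOn ℝ 2 (X j) (Ici 0))
    (heq : ∀ j, 1 ≤ j → j ≤ N - 1 → ∀ t ∈ Ici (0 : ℝ),
      derivWithin (derivWithin (X j) (Ici 0)) (Ici 0) t =
        g (X (j + 1) t - X j t) - g (X j t - X (j - 1) t)) :
    IsNewtonChain g N S X (fun j ↦ derivWithin (X j) (Ici 0)) where
  hasDerivWithinAt_position j hj t ht :=
    ((hX (j + 1) (by lia) (by lia)).differentiableOn two_ne_zero t ht.1).hasDerivWithinAt.mono
      Ico_subset_Ici_self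
  hasDerivWithinAt_velocity j hj t ht := by
    have hV : ContDiffOn ℝ 1 (derivWithin (X (j + 1)) (Ici 0)) (Ici 0) :=
      (hX (j + 1) (by lia) (by lia)).derivWithin (uniqueDiffOn_Ici 0) (by norm_num)
    have hV' := (hV.differentiableOn one_ne_zero t ht.1).hasDerivWithinAt
    rw [heq (j + 1) (by lia) (by lia) t ht.1] at hV'
    exact hV'.mono Ico_subset_Ici_self

lemma IsNewtonChain.isChainDiscrepancy_sub {g : E → E} {s : Set E} {K : ℝ≥0} {N : ℕ} {S : ℝ}
    {X V X' V' : ℕ → ℝ → E} (hX : IsNewtonChain g N S X V) (hX' : IsNewtonChain g N S X' V')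
    (hs : Bornology.IsBounded s) (hg : LipschitzOnWith K g s)
    (hbdy : ∀ t ∈ Ico 0 S, X N t = X' N t)
    (hinit : ∀ j, j + 1 < N → X (j + 1) 0 = X' (j + 1) 0 ∧ V (j + 1) 0 = V' (j + 1) 0)
    (hstrain : ∀ j < N, ∀ t ∈ Ico 0 S, X (j + 1) t - X j t ∈ s ∧ X' (j + 1) t - X' j t ∈ s) :
    IsChainDiscrepancy K (Metric.diam s) N S (fun j t ↦ X j t - X' j t)
      (fun j t ↦ V j t - V' j t) where
  hasDerivWithinAt j hj t ht :=
    (hX.hasDerivWithinAt_position j hj t ht).sub (hX'.hasDerivWithinAt_position j hj t ht)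
  differentiableOn_velocity j hj t ht :=
    ((hX.hasDerivWithinAt_velocity j hj t ht).sub
      (hX'.hasDerivWithinAt_velocity j hj t ht)).differentiableWithinAt
  norm_derivWithin_velocity_le j hj t ht := by
    have hforce (i : ℕ) (hi : i < N) :
        ‖g (X (i + 1) t - X i t) - g (X' (i + 1) t - X' i t)‖ ≤
          K * ‖(X (i + 1) t - X' (i + 1) t) - (X i t - X' i t)‖ := by
      rw [sub_sub_sub_comm (X (i + 1) t)]
      exact hg.norm_sub_le (hstrain i hi t ht).1 (hstrain i hi t ht).2
    have hderiv := ((hX.hasDerivWithinAt_velocity j hj t ht).sub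
      (hX'.hasDerivWithinAt_velocity j hj t ht)).derivWithin (uniqueDiffOn_Ico 0 S t ht)
    rw [show (fun t ↦ V (j + 1) t - V' (j + 1) t) = V (j + 1) - V' (j + 1) from rfl, hderiv,
      sub_sub_sub_comm, mul_add]
    exact (norm_sub_le _ _).trans (add_le_add (hforce (j + 1) hj) (hforce j (by lia)))
  initial_position j hj := sub_eq_zero.2 (hinit j hj).1
  initial_velocity j hj := sub_eq_zero.2 (hinit j hj).2
  right_boundary t ht := sub_eq_zero.2 (hbdy t ht)
  norm_strain_le j hj t ht := by
    rw [sub_sub_sub_comm, ← dist_eq_norm]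
    exact Metric.dist_le_diam_of_mem hs (hstrain j hj t ht).1 (hstrain j hj t ht).2

namespace IsChainDiscrepancy

variable {K : ℝ≥0} {L : ℝ} {N : ℕ} {S : ℝ} {D V : ℕ → ℝ → E}

lemma norm_le (h : IsChainDiscrepancy K L N S D V) {j : ℕ} (hj : j ≤ N) {t : ℝ}
    (ht : t ∈ Ico 0 S) : ‖D j t‖ ≤ N * L := by
  have hdist (n : ℕ) (hn : n ≤ N) : ‖D n t‖ ≤ (N - n : ℕ) * L := by
    have hsum := dist_le_Ico_sum_of_dist_le (f := fun i ↦ D i t) (d := fun _ ↦ L) hn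
      fun {i} _ hi ↦ by rw [dist_comm, dist_eq_norm]; exact h.norm_strain_le i hi t ht
    simpa [h.right_boundary t ht] using hsum
  rcases N.eq_zero_or_pos with rfl | hN
  · simpa using hdist j hj
  · have hL : 0 ≤ L := (norm_nonneg _).trans (h.norm_strain_le 0 hN t ht)
    exact (hdist j hj).trans (by gcongr; exact Nat.sub_le N j)

lemma norm_velocity_le_of_norm_le (h : IsChainDiscrepancy K L N S D V) {k m : ℕ} {M : ℝ}
    (hD : ∀ j, k ≤ j → j ≤ N → ∀ t ∈ Ico 0 S, ‖D j t‖ ≤ M * ((2 * √K * t) ^ m / m !))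
    {j : ℕ} (hkj : k ≤ j) (hjN : j + 1 < N) {t : ℝ} (ht : t ∈ Ico 0 S) :
    ‖V (j + 1) t‖ ≤ M * (2 * √K) * ((2 * √K * t) ^ (m + 1) / (m + 1)!) := by
  refine norm_le_pow_succ_div_factorial_of_norm_deriv_le m
    (fun r hr ↦ (h.differentiableOn_velocity j hjN r hr).hasDerivWithinAt)
    (h.initial_velocity j hjN) (fun r hr ↦ ?_) ht
  have hleft := hD j hkj (by lia) r hr
  have hmid := hD (j + 1) (by lia) hjN.le r hr
  have hright := hD (j + 2) (by lia) hjN r hr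
  have hsqrt : √(K : ℝ) * √(K : ℝ) = K := Real.mul_self_sqrt K.2
  set q := (2 * √K * r) ^ m / (m ! : ℝ)
  calc ‖derivWithin (V (j + 1)) (Ico 0 S) r‖
      ≤ K * (‖D (j + 2) r - D (j + 1) r‖ + ‖D (j + 1) r - D j r‖) :=
        h.norm_derivWithin_velocity_le j hjN r hr
    _ ≤ K * ((M * q + M * q) + (M * q + M * q)) := by
        gcongr
        · exact norm_sub_le_of_le hright hmid
        · exact norm_sub_le_of_le hmid hleft
    _ = M * (2 * √K) * (2 * √K) * q := by linear_combination (-4 * M * q) * hsqrt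

lemma norm_le_pow_div_factorial (h : IsChainDiscrepancy K L N S D V) {k j : ℕ} (hkj : k ≤ j)
    (hjN : j ≤ N) {t : ℝ} (ht : t ∈ Ico 0 S) :
    ‖D j t‖ ≤ N * L * ((2 * √K * t) ^ (2 * k) / (2 * k)!) := by
  induction k generalizing j t with
  | zero => simpa using h.norm_le hjN ht
  | succ k ih =>
    rcases hjN.eq_or_lt with rfl | hjN
    · have hM := (norm_nonneg _).trans (h.norm_le le_rfl ht)
      have ht0 : 0 ≤ t := ht.1
      rw [h.right_boundary t ht, norm_zero]
      positivity
    · obtain ⟨i, rfl⟩ := Nat.exists_eq_add_one_of_ne_zero (by lia : j ≠ 0)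
      exact norm_le_pow_succ_div_factorial_of_norm_deriv_le (2 * k + 1) (h.hasDerivWithinAt i hjN)
        (h.initial_position i hjN)
        (fun r hr ↦ h.norm_velocity_le_of_norm_le (fun j hkj hjN t ht ↦ ih hkj hjN ht)
          (by lia) hjN hr) ht

lemma norm_le_exp (h : IsChainDiscrepancy K L N S D V) {y : ℝ} (hS : Real.exp 2 * √K * S ≤ y)
    {j : ℕ} (hyj : y ≤ j) (hjN : j ≤ N) {t : ℝ} (ht : t ∈ Ico 0 S) :
    ‖D j t‖ ≤ N * L * Real.exp (-2 * y) := by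
  have hM : 0 ≤ N * L := (norm_nonneg _).trans (h.norm_le hjN ht)
  refine (h.norm_le_pow_div_factorial le_rfl hjN ht).trans ?_
  gcongr
  refine (mul_pow_div_factorial_le_exp (Real.sqrt_nonneg _) hS ht (2 * j)).trans ?_
  rw [Real.exp_le_exp]
  push_cast
  linarith

lemma norm_strain_le_exp (h : IsChainDiscrepancy K L N S D V) {y : ℝ}
    (hS : Real.exp 2 * √K * S ≤ y) {j : ℕ} (hyj : y ≤ j) (hjN : j < N) {t : ℝ}
    (ht : t ∈ Ico 0 S) : ‖D (j + 1) t - D j t‖ ≤ 2 * (N * L * Real.exp (-2 * y)) := by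
  have hright := h.norm_le_exp hS (j := j + 1) (by push_cast; linarith) hjN ht
  have hleft := h.norm_le_exp hS hyj hjN.le ht
  exact (norm_sub_le_of_le hright hleft).trans_eq (two_mul _).symm

lemma norm_velocity_le_exp (h : IsChainDiscrepancy K L N S D V) {y : ℝ}
    (hS : Real.exp 2 * √K * S ≤ y) {j : ℕ} (hj0 : 0 < j) (hyj : y ≤ j) (hjN : j < N) {t : ℝ}
    (ht : t ∈ Ico 0 S) : ‖V j t‖ ≤ N * L * (2 * √K) * Real.exp (2 - 2 * y) := by
  obtain ⟨i, rfl⟩ := Nat.exists_eq_add_one_of_ne_zero hj0.ne'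
  have hM : 0 ≤ N * L := (norm_nonneg _).trans (h.norm_le hjN.le ht)
  refine (h.norm_velocity_le_of_norm_le
    (fun j hij hjN t ht ↦ h.norm_le_pow_div_factorial hij hjN ht) le_rfl hjN ht).trans ?_
  gcongr
  refine (mul_pow_div_factorial_le_exp (Real.sqrt_nonneg _) hS ht (2 * i + 1)).trans ?_
  rw [Real.exp_le_exp]
  push_cast at hyj ⊢
  linarith

end IsChainDiscrepancy

end Chain

section Macroscopic

open scoped NNReal

variable {E : Type*} [NormedAddCommGroup E]

/-- The supremum of `‖f j t‖` over the sites `N x < j < N` and the times `0 ≤ t < N τ`, i.e. to the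
right of the macroscopic position `x` up to the macroscopic time `τ`. It is a real supremum, so it
is `0` when there are no such `j` or `t`, or when the values are unbounded. -/
noncomputable def supBeyond (N : ℕ) (x τ : ℝ) (f : ℕ → ℝ → E) : ℝ :=
  ⨆ (j : ℕ) (_ : N * x < j ∧ j < N) (t : ℝ) (_ : t ∈ Ico 0 (N * τ)), ‖f j t‖

lemma supBeyond_nonneg (N : ℕ) (x τ : ℝ) (f : ℕ → ℝ → E) : 0 ≤ supBeyond N x τ f :=
  Real.iSup_nonneg fun _ ↦ Real.iSup_nonneg fun _ ↦ Real.iSup_nonneg fun _ ↦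
    Real.iSup_nonneg fun _ ↦ norm_nonneg _

lemma supBeyond_le {N : ℕ} {x τ B : ℝ} {f : ℕ → ℝ → E} (hB : 0 ≤ B)
    (hf : ∀ j : ℕ, N * x < j → j < N → ∀ t ∈ Ico 0 (N * τ), ‖f j t‖ ≤ B) :
    supBeyond N x τ f ≤ B :=
  Real.iSup_le (fun j ↦ Real.iSup_le (fun hj ↦ Real.iSup_le (fun t ↦ Real.iSup_le
    (fun ht ↦ hf j hj.1 hj.2 t ht) hB) hB) hB) hB

lemma tendsto_pow_mul_exp_neg_mul_atTop (k : ℕ) {x : ℝ} (hx : 0 < x) :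
    Tendsto (fun N : ℕ ↦ (N : ℝ) ^ k * Real.exp (-2 * (N * x))) atTop (nhds 0) := by
  have hr : |Real.exp (-2 * x)| < 1 := by
    rw [Real.abs_exp, Real.exp_lt_one_iff]
    linarith
  refine (tendsto_pow_const_mul_const_pow_of_abs_lt_one k hr).congr fun N ↦ ?_
  rw [← Real.exp_nat_mul, mul_left_comm]

section Limits

variable [NormedSpace ℝ E] {K : ℝ≥0} {L x τ : ℝ} {D V : ℕ → ℕ → ℝ → E}

lemma tendsto_mul_supBeyond_strain (hL : 0 ≤ L) (hx : 0 < x) (hτ : Real.exp 2 * √K * τ ≤ x)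
    (h : ∀ N : ℕ, IsChainDiscrepancy K L N (N * τ) (D N) (V N)) :
    Tendsto (fun N : ℕ ↦ (N : ℝ) * supBeyond N x τ (fun j t ↦ D N (j + 1) t - D N j t))
      atTop (nhds 0) := by
  have hlim : Tendsto (fun N : ℕ ↦ 2 * L * ((N : ℝ) ^ 2 * Real.exp (-2 * (N * x))))
      atTop (nhds 0) := by
    simpa using (tendsto_pow_mul_exp_neg_mul_atTop 2 hx).const_mul (2 * L)
  refine squeeze_zero (fun N ↦ mul_nonneg N.cast_nonneg (supBeyond_nonneg ..)) (fun N ↦ ?_) hlim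
  have hS : Real.exp 2 * √K * (N * τ) ≤ N * x := by
    rw [mul_left_comm]
    gcongr
  calc (N : ℝ) * supBeyond N x τ (fun j t ↦ D N (j + 1) t - D N j t)
      ≤ N * (2 * (N * L * Real.exp (-2 * (N * x)))) := by
        gcongr
        exact supBeyond_le (by positivity)
          fun j hj hjN t ht ↦ (h N).norm_strain_le_exp hS hj.le hjN ht
    _ = 2 * L * ((N : ℝ) ^ 2 * Real.exp (-2 * (N * x))) := by ring

lemma tendsto_supBeyond_velocity (hL : 0 ≤ L) (hx : 0 < x) (hτ : Real.exp 2 * √K * τ ≤ x)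
    (h : ∀ N : ℕ, IsChainDiscrepancy K L N (N * τ) (D N) (V N)) :
    Tendsto (fun N : ℕ ↦ supBeyond N x τ (V N)) atTop (nhds 0) := by
  have hlim : Tendsto (fun N : ℕ ↦ L * (2 * √K) * Real.exp 2 *
      ((N : ℝ) ^ 1 * Real.exp (-2 * (N * x)))) atTop (nhds 0) := by
    simpa using (tendsto_pow_mul_exp_neg_mul_atTop 1 hx).const_mul (L * (2 * √K) * Real.exp 2)
  refine squeeze_zero (fun N ↦ supBeyond_nonneg ..) (fun N ↦ ?_) hlim
  have hS : Real.exp 2 * √K * (N * τ) ≤ N * x := by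
    rw [mul_left_comm]
    gcongr
  calc supBeyond N x τ (V N) ≤ N * L * (2 * √K) * Real.exp (2 - 2 * (N * x)) :=
        supBeyond_le (by positivity) fun j hj hjN t ht ↦
          (h N).norm_velocity_le_exp hS
            (Nat.cast_pos.1 ((by positivity : 0 ≤ N * x).trans_lt hj)) hj.le hjN ht
    _ = L * (2 * √K) * Real.exp 2 * ((N : ℝ) ^ 1 * Real.exp (-2 * (N * x))) := by
        rw [sub_eq_add_neg, ← neg_mul, Real.exp_add]
        ring

end Limits

theorem macroscopic_light_cone_general [NormedSpace ℝ E] {g : E → E} {s : Set E} {K : ℝ≥0}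
    (hs : Bornology.IsBounded s) (hg : LipschitzOnWith K g s) {x τ : ℝ} (hx : x ∈ Ioo 0 1)
    (hτ : Real.exp 2 * √K * τ ≤ x) {X V X' V' : ℕ → ℕ → ℝ → E}
    (hX : ∀ N : ℕ, IsNewtonChain g N (N * τ) (X N) (V N))
    (hX' : ∀ N : ℕ, IsNewtonChain g N (N * τ) (X' N) (V' N))
    (hbdy : ∀ N : ℕ, ∀ t ∈ Ico 0 (N * τ), X N N t = X' N N t)
    (hinit : ∀ N j, j + 1 < N → X N (j + 1) 0 = X' N (j + 1) 0 ∧ V N (j + 1) 0 = V' N (j + 1) 0)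
    (hstrain : ∀ N : ℕ, ∀ j < N, ∀ t ∈ Ico 0 (N * τ),
      X N (j + 1) t - X N j t ∈ s ∧ X' N (j + 1) t - X' N j t ∈ s) :
    Tendsto (fun N : ℕ ↦ (N : ℝ) * supBeyond N x τ
      (fun j t ↦ (X N (j + 1) t - X N j t) - (X' N (j + 1) t - X' N j t))) atTop (nhds 0) ∧
    Tendsto (fun N : ℕ ↦ supBeyond N x τ (fun j t ↦ V N j t - V' N j t)) atTop (nhds 0) := by
  have h (N : ℕ) := (hX N).isChainDiscrepancy_sub (hX' N) hs hg (hbdy N) (hinit N) (hstrain N)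
  refine ⟨?_, tendsto_supBeyond_velocity Metric.diam_nonneg hx.1 hτ h⟩
  simpa only [sub_sub_sub_comm] using
    tendsto_mul_supBeyond_strain Metric.diam_nonneg hx.1 hτ h

end Macroscopic

/-- **Macroscopic finite speed of propagation (light cone).**
Let `W ∈ C²` with `W'' ≥ α > 0` and `T > 0`.  For each `N`, let `X^N`, `X̃^N` be two
solutions of the Newton chain on `{0,…,N}` with common constant right boundary
`N·φ_r`, coinciding at `t = 0` for `j ∈ {1,…,N−1}`.  Assume a uniform energy bound
`Σ W(U^N_j) + (1/2) Σ (V^N_j)² ≤ C N`, that all values `U^N_j(t)`, `Ũ^N_j(t)`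
(`t ∈ [0,NT]`) lie in `[u₁,u₂]` and `|W''| ≤ K` there.  Set `c = e²√K`.  Then for
every `x ∈ (0,1)` and `τ < x/c`, `τ ≤ T`,
`N · sup{|U^N_j(t) − Ũ^N_j(t)| : 0 ≤ t < Nτ, j > Nx} → 0` and
`sup{|V^N_j(t) − Ṽ^N_j(t)| : 0 ≤ t < Nτ, j > Nx} → 0` as `N → ∞`. -/
theorem macroscopic_light_cone
    (W : ℝ → ℝ) (hW : ContDiff ℝ 2 W)
    (α : ℝ) (hα : 0 < α) (hconv : ∀ u : ℝ, α ≤ deriv (deriv W) u)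
    (T : ℝ) (hT : 0 < T) (φr : ℝ)
    (X X' : ℕ → ℕ → ℝ → ℝ)
    (hsm : ∀ N : ℕ, ∀ j ≤ N,
      ContDiffOn ℝ 2 (X N j) (Set.Ici 0) ∧ ContDiffOn ℝ 2 (X' N j) (Set.Ici 0))
    (hbdy : ∀ N : ℕ, ∀ t ∈ Set.Ici (0 : ℝ),
      X N N t = (N : ℝ) * φr ∧ X' N N t = (N : ℝ) * φr)
    (heq : ∀ N : ℕ, ∀ j, 1 ≤ j → j ≤ N - 1 → ∀ t ∈ Set.Ici (0 : ℝ),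
      derivWithin (derivWithin (X N j) (Set.Ici 0)) (Set.Ici 0) t
        = deriv W (X N (j + 1) t - X N j t) - deriv W (X N j t - X N (j - 1) t))
    (heq' : ∀ N : ℕ, ∀ j, 1 ≤ j → j ≤ N - 1 → ∀ t ∈ Set.Ici (0 : ℝ),
      derivWithin (derivWithin (X' N j) (Set.Ici 0)) (Set.Ici 0) t
        = deriv W (X' N (j + 1) t - X' N j t) - deriv W (X' N j t - X' N (j - 1) t))
    (hinit : ∀ N : ℕ, ∀ j, 1 ≤ j → j ≤ N - 1 →
      X N j 0 = X' N j 0 ∧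
      derivWithin (X N j) (Set.Ici 0) 0 = derivWithin (X' N j) (Set.Ici 0) 0)
    (C : ℝ) (hC : 0 ≤ C)
    (hE : ∀ N : ℕ, ∀ t ∈ Set.Ici (0 : ℝ),
      (∑ j ∈ Finset.range N, W (X N (j + 1) t - X N j t))
        + (1 / 2) * ∑ j ∈ Finset.range N, (derivWithin (X N j) (Set.Ici 0) t) ^ 2
      ≤ C * N)
    (u₁ u₂ : ℝ)
    (hU : ∀ N : ℕ, ∀ j < N, ∀ t ∈ Set.Icc (0 : ℝ) ((N : ℝ) * T),
      X N (j + 1) t - X N j t ∈ Set.Icc u₁ u₂ ∧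
      X' N (j + 1) t - X' N j t ∈ Set.Icc u₁ u₂)
    (K : ℝ) (hK : ∀ u ∈ Set.Icc u₁ u₂, |deriv (deriv W) u| ≤ K) :
    ∀ x ∈ Set.Ioo (0 : ℝ) 1, ∀ τ : ℝ, τ < x / (Real.exp 2 * Real.sqrt K) → τ ≤ T →
      Tendsto (fun N : ℕ => (N : ℝ) *
          ⨆ (j : ℕ) (_ : (N : ℝ) * x < (j : ℝ) ∧ j < N) (t : ℝ)
            (_ : t ∈ Set.Ico (0 : ℝ) ((N : ℝ) * τ)),
            |(X N (j + 1) t - X N j t) - (X' N (j + 1) t - X' N j t)|)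
        atTop (nhds 0) ∧
      Tendsto (fun N : ℕ =>
          ⨆ (j : ℕ) (_ : (N : ℝ) * x < (j : ℝ) ∧ j < N) (t : ℝ)
            (_ : t ∈ Set.Ico (0 : ℝ) ((N : ℝ) * τ)),
            |derivWithin (X N j) (Set.Ici 0) t - derivWithin (X' N j) (Set.Ici 0) t|)
        atTop (nhds 0) := by
  intro x hx τ hτ hτT
  have hcτ : Real.exp 2 * √K.toNNReal * τ ≤ x := by
    have hsqrt : √(K.toNNReal : ℝ) = √K := by simp only [Real.sqrt, Real.toNNReal_coe]
    rw [hsqrt, mul_comm]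
    exact mul_le_of_le_div₀ hx.1.le (by positivity) hτ.le
  exact macroscopic_light_cone_general (Metric.isBounded_Icc u₁ u₂)
    (lipschitzOnWith_deriv_of_abs_deriv_deriv_le hW (convex_Icc u₁ u₂) hK) hx hcτ
    (fun N ↦ .of_contDiffOn (fun j _ hj ↦ (hsm N j (hj.trans (N.sub_le 1))).1) (heq N))
    (fun N ↦ .of_contDiffOn (fun j _ hj ↦ (hsm N j (hj.trans (N.sub_le 1))).2) (heq' N))
    (fun N t ht ↦ (hbdy N t ht.1).1.trans (hbdy N t ht.1).2.symm)
    (fun N j hj ↦ hinit N (j + 1) (by lia) (by lia))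
    (fun N j hj t ht ↦ hU N j hj t ⟨ht.1, ht.2.le.trans (by gcongr)⟩)
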